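/- A number λ ∈ ℂ is an eigenvalue of the quasi-periodic boundary value problem B — i.e., there exists a not identically zero function y on [0,T] which on each subinterval [b_{j−1}, b_j] has y, y' absolutely continuous and satisfies −y''+q y = λ y a.e., satisfies the discontinuity conditions, and satisfies the quasi-periodic boundary conditions y(0) = α·y(T) and y'(0) − h·y(0) = β·y'(T) — if and only if a(λ) = 0, where a(λ) = α·φ(T,λ) + β·S'(T,λ) − (1 + αβ). -/

import Mathlib

/-!
For two solutions of the equation the Wronskian is constant on every interval, and it survives the
discontinuity conditions because the jump matrix `[[γ, 0], [η, γ⁻¹]]` has determinant one. Hence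
every solution is `y(0) C + y'(0) S`, and the boundary conditions become a homogeneous linear system
for `(y(0), y'(0))`, whose determinant is `-a(λ)` since `C S' - C' S = 1` at `T`.

The integral equations do not by themselves ask the integrands to be integrable, so the argument
only applies once integrability has been established. It follows from Grönwall's inequality.
-/

open MeasureTheory Set

/-- `PiecewiseSLSol q N b γ η lam y y'` : the family of pieces `y j` (with
derivatives `y' j`), `j = 1,…,N`, solves `-y'' + q y = lam y` on each subinterval
`[b (j-1), b j]` with the discontinuity (jump) conditions at the interior points. -/
def PiecewiseSLSol (q : ℝ → ℝ) (N : ℕ) (b : ℕ → ℝ) (γ η : ℕ → ℝ) (lam : ℂ)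
    (y y' : ℕ → ℝ → ℂ) : Prop :=
  (∀ j, 1 ≤ j → j ≤ N → ∀ x ∈ Icc (b (j - 1)) (b j),
      y j x = y j (b (j - 1)) + ∫ t in (b (j - 1))..x, y' j t) ∧
  (∀ j, 1 ≤ j → j ≤ N → ∀ x ∈ Icc (b (j - 1)) (b j),
      y' j x = y' j (b (j - 1)) + ∫ t in (b (j - 1))..x, ((q t : ℂ) - lam) * y j t) ∧
  (∀ j, 1 ≤ j → j ≤ N - 1 →
      y (j + 1) (b j) = (γ j : ℂ) * y j (b j) ∧
      y' (j + 1) (b j) = ((γ j : ℂ))⁻¹ * y' j (b j) + (η j : ℂ) * y j (b j))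

/-! ### Absolutely continuous functions and their densities -/

section Primitive

variable {E : Type*} [NormedAddCommGroup E] [NormedSpace ℝ E] {a b : ℝ}

/-- `f` is absolutely continuous on the interval between `a` and `b` and its almost everywhere
derivative is `f'`, encoded by the fundamental theorem of calculus. -/
structure IsPrimitiveOn (f f' : ℝ → E) (a b : ℝ) : Prop where
  intervalIntegrable : IntervalIntegrable f' volume a b
  eq_add_integral : ∀ x ∈ uIcc a b, f x = f a + ∫ t in a..x, f' t

theorem absolutelyContinuousOnInterval_of_dist_le {X Y : Type*} [PseudoMetricSpace X]
    [PseudoMetricSpace Y] {f : ℝ → X} {g : ℝ → Y} (K : ℝ)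
    (hg : AbsolutelyContinuousOnInterval g a b)
    (hfg : ∀ x ∈ uIcc a b, ∀ y ∈ uIcc a b, dist (f x) (f y) ≤ K * dist (g x) (g y)) :
    AbsolutelyContinuousOnInterval f a b := by
  refine squeeze_zero' (Filter.Eventually.of_forall fun _ ↦ by positivity) ?_
    (by simpa only [mul_zero] using Filter.Tendsto.const_mul K hg)
  filter_upwards [Filter.mem_inf_of_right (Filter.mem_principal_self _)] with I hI
  rw [Finset.mul_sum]
  exact Finset.sum_le_sum fun i hi ↦ hfg _ (hI.1 i hi).1 _ (hI.1 i hi).2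

theorem absolutelyContinuousOnInterval_comp_of_contDiff {F : Type*} [NormedAddCommGroup F]
    [NormedSpace ℝ F] [ProperSpace E] {f : ℝ → E} {g : E → F} (hg : ContDiff ℝ 1 g)
    (hf : AbsolutelyContinuousOnInterval f a b) :
    AbsolutelyContinuousOnInterval (fun x ↦ g (f x)) a b := by
  obtain ⟨M, hM⟩ := hf.exists_bound
  obtain ⟨K, hK⟩ := hg.contDiffOn.exists_lipschitzOnWith one_ne_zero
    (convex_closedBall (0 : E) M) (isCompact_closedBall 0 M)
  exact absolutelyContinuousOnInterval_of_dist_le K hf fun x hx y hy ↦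
    hK.dist_le_mul _ (by simpa using hM x hx) _ (by simpa using hM y hy)

theorem absolutelyContinuousOnInterval_intervalIntegral {f : ℝ → E}
    (hf : IntervalIntegrable f volume a b) :
    AbsolutelyContinuousOnInterval (fun x ↦ ∫ t in a..x, f t) a b := by
  refine absolutelyContinuousOnInterval_of_dist_le 1
    (hf.norm.absolutelyContinuousOnInterval_intervalIntegral left_mem_uIcc) fun x hx y hy ↦ ?_
  have hfx := hf.mono_set (uIcc_subset_uIcc_left hx)
  have hfy := hf.mono_set (uIcc_subset_uIcc_left hy)
  rw [one_mul, dist_eq_norm, Real.dist_eq, intervalIntegral.integral_interval_sub_left hfx hfy,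
    intervalIntegral.integral_interval_sub_left hfx.norm hfy.norm]
  exact intervalIntegral.norm_integral_le_abs_integral_norm

theorem IsPrimitiveOn.mono {f f' : ℝ → E} {c : ℝ} (hf : IsPrimitiveOn f f' a b)
    (hc : c ∈ uIcc a b) : IsPrimitiveOn f f' a c :=
  ⟨hf.intervalIntegrable.mono_set (uIcc_subset_uIcc_left hc),
    fun x hx ↦ hf.eq_add_integral x (uIcc_subset_uIcc_left hc hx)⟩

theorem IsPrimitiveOn.congr {f g f' : ℝ → E} (hf : IsPrimitiveOn f f' a b)
    (hfg : EqOn f g (uIcc a b)) : IsPrimitiveOn g f' a b :=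
  ⟨hf.intervalIntegrable, fun x hx ↦ by
    rw [← hfg hx, ← hfg left_mem_uIcc, hf.eq_add_integral x hx]⟩

theorem IsPrimitiveOn.absolutelyContinuousOnInterval {f f' : ℝ → E}
    (hf : IsPrimitiveOn f f' a b) : AbsolutelyContinuousOnInterval f a b :=
  absolutelyContinuousOnInterval_of_dist_le 1
    (absolutelyContinuousOnInterval_intervalIntegral hf.intervalIntegrable)
    fun x hx y hy ↦ by
      rw [one_mul, hf.eq_add_integral x hx, hf.eq_add_integral y hy, dist_add_left]

theorem IsPrimitiveOn.continuousOn {f f' : ℝ → E} (hf : IsPrimitiveOn f f' a b) :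
    ContinuousOn f (uIcc a b) :=
  hf.absolutelyContinuousOnInterval.continuousOn

theorem IsPrimitiveOn.norm_le {f f' : ℝ → E} (hab : a ≤ b) (hf : IsPrimitiveOn f f' a b) :
    ‖f b‖ ≤ ‖f a‖ + ∫ t in a..b, ‖f' t‖ := by
  rw [hf.eq_add_integral b right_mem_uIcc]
  exact (norm_add_le _ _).trans
    (by gcongr; exact intervalIntegral.norm_integral_le_integral_norm hab)

theorem IsPrimitiveOn.sub {f f' g g' : ℝ → E} (hf : IsPrimitiveOn f f' a b)
    (hg : IsPrimitiveOn g g' a b) :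
    IsPrimitiveOn (fun x ↦ f x - g x) (fun x ↦ f' x - g' x) a b where
  intervalIntegrable := hf.intervalIntegrable.sub hg.intervalIntegrable
  eq_add_integral x hx := by
    rw [hf.eq_add_integral x hx, hg.eq_add_integral x hx, intervalIntegral.integral_sub
      (hf.mono hx).intervalIntegrable (hg.mono hx).intervalIntegrable]
    abel

theorem IsPrimitiveOn.add {f f' g g' : ℝ → E} (hf : IsPrimitiveOn f f' a b)
    (hg : IsPrimitiveOn g g' a b) :
    IsPrimitiveOn (fun x ↦ f x + g x) (fun x ↦ f' x + g' x) a b where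
  intervalIntegrable := hf.intervalIntegrable.add hg.intervalIntegrable
  eq_add_integral x hx := by
    rw [hf.eq_add_integral x hx, hg.eq_add_integral x hx, intervalIntegral.integral_add
      (hf.mono hx).intervalIntegrable (hg.mono hx).intervalIntegrable]
    abel

theorem IsPrimitiveOn.const_mul {𝕜 : Type*} [RCLike 𝕜] {f f' : ℝ → 𝕜} (c : 𝕜)
    (hf : IsPrimitiveOn f f' a b) :
    IsPrimitiveOn (fun x ↦ c * f x) (fun x ↦ c * f' x) a b where
  intervalIntegrable := hf.intervalIntegrable.const_mul c
  eq_add_integral x hx := by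
    rw [hf.eq_add_integral x hx, intervalIntegral.integral_const_mul, mul_add]

theorem isPrimitiveOn_const_add_integral {f : ℝ → E} (c : E)
    (hf : IntervalIntegrable f volume a b) :
    IsPrimitiveOn (fun x ↦ c + ∫ t in a..x, f t) f a b :=
  ⟨hf, fun x _ ↦ by simp⟩

variable [CompleteSpace E]

theorem isPrimitiveOn_of_ae_hasDerivAt {f f' : ℝ → E}
    (hf : AbsolutelyContinuousOnInterval f a b) (hf' : IntervalIntegrable f' volume a b)
    (h : ∀ᵐ x, x ∈ uIcc a b → HasDerivAt f (f' x) x) : IsPrimitiveOn f f' a b := by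
  have hdiff : ∀ᵐ x, x ∈ uIcc a b → HasDerivAt (fun x ↦ f x - ∫ t in a..x, f' t) 0 x := by
    filter_upwards [h, hf'.ae_hasDerivAt_integral] with x hfx hf'x hx
    simpa only [sub_self] using (hfx hx).fun_sub (hf'x hx a left_mem_uIcc)
  obtain ⟨c, hc⟩ := (hf.fun_sub
    (absolutelyContinuousOnInterval_intervalIntegral hf')).const_of_ae_hasDerivAt_zero hdiff
  have hca : f a = c := by simpa using hc a left_mem_uIcc
  exact ⟨hf', fun x hx ↦ by rw [hca, ← hc x hx, sub_add_cancel]⟩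

-- `f` itself need not be differentiable at the endpoints, the global primitive of `f'` is.
theorem IsPrimitiveOn.exists_eqOn_hasDerivAt {f f' : ℝ → E} (hf : IsPrimitiveOn f f' a b) :
    ∃ F : ℝ → E, AbsolutelyContinuousOnInterval F a b ∧ EqOn F f (uIcc a b) ∧
      ∀ᵐ x, x ∈ uIcc a b → HasDerivAt F (f' x) x := by
  refine ⟨fun x ↦ f a + ∫ t in a..x, f' t,
    (isPrimitiveOn_const_add_integral _ hf.intervalIntegrable).absolutelyContinuousOnInterval,
    fun x hx ↦ (hf.eq_add_integral x hx).symm, ?_⟩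
  filter_upwards [hf.intervalIntegrable.ae_hasDerivAt_integral] with x hx hxab
  exact (hx hxab a left_mem_uIcc).const_add _

theorem IsPrimitiveOn.mul {𝕜 : Type*} [RCLike 𝕜] {f f' g g' : ℝ → 𝕜}
    (hf : IsPrimitiveOn f f' a b) (hg : IsPrimitiveOn g g' a b) :
    IsPrimitiveOn (fun x ↦ f x * g x) (fun x ↦ f' x * g x + f x * g' x) a b := by
  obtain ⟨F, hF, hFf, hF'⟩ := hf.exists_eqOn_hasDerivAt
  obtain ⟨G, hG, hGg, hG'⟩ := hg.exists_eqOn_hasDerivAt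
  have hint : IntervalIntegrable (fun x ↦ f' x * g x + f x * g' x) volume a b :=
    (hf.intervalIntegrable.mul_continuousOn hg.continuousOn).add
      (hg.intervalIntegrable.continuousOn_mul hf.continuousOn)
  refine (isPrimitiveOn_of_ae_hasDerivAt (hF.fun_smul hG) hint ?_).congr
    fun x hx ↦ by simp only [hFf hx, hGg hx, smul_eq_mul]
  filter_upwards [hF', hG'] with x hFx hGx hx
  have hFG := (hFx hx).fun_mul (hGx hx)
  rw [hFf hx, hGg hx] at hFG
  exact hFG

theorem IsPrimitiveOn.exp {f f' : ℝ → ℝ} (hf : IsPrimitiveOn f f' a b) :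
    IsPrimitiveOn (fun x ↦ Real.exp (f x)) (fun x ↦ Real.exp (f x) * f' x) a b := by
  obtain ⟨F, hF, hFf, hF'⟩ := hf.exists_eqOn_hasDerivAt
  have hint : IntervalIntegrable (fun x ↦ Real.exp (f x) * f' x) volume a b :=
    hf.intervalIntegrable.continuousOn_mul hf.continuousOn.rexp
  refine (isPrimitiveOn_of_ae_hasDerivAt
    (absolutelyContinuousOnInterval_comp_of_contDiff Real.contDiff_exp hF) hint ?_).congr
    fun x hx ↦ by simp only [hFf hx]
  filter_upwards [hF'] with x hFx hx
  simpa only [hFf hx] using (hFx hx).exp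

end Primitive

theorem gronwall_le_mul_exp_integral {a b c : ℝ} (hab : a ≤ b) {k w : ℝ → ℝ}
    (hk : IntervalIntegrable k volume a b) (hk0 : ∀ x ∈ Icc a b, 0 ≤ k x)
    (hw : ContinuousOn w (uIcc a b))
    (h : ∀ x ∈ Icc a b, w x ≤ c + ∫ t in a..x, k t * w t) :
    w b ≤ c * Real.exp (∫ t in a..b, k t) := by
  set G : ℝ → ℝ := fun x ↦ c + ∫ t in a..x, k t * w t with hG
  set E : ℝ → ℝ := fun x ↦ Real.exp (-1 * (0 + ∫ t in a..x, k t)) with hE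
  have hGE : IsPrimitiveOn (fun x ↦ G x * E x)
      (fun x ↦ k x * w x * E x + G x * (E x * (-1 * k x))) a b :=
    (isPrimitiveOn_const_add_integral c (hk.mul_continuousOn hw)).mul
      ((isPrimitiveOn_const_add_integral 0 hk).const_mul (-1)).exp
  have hderiv : ∫ x in a..b, (k x * w x * E x + G x * (E x * (-1 * k x))) ≤ 0 := by
    rw [← neg_nonneg, ← intervalIntegral.integral_neg]
    refine intervalIntegral.integral_nonneg hab fun x hx ↦ ?_
    have hEx : 0 ≤ E x := (Real.exp_pos _).le
    have hwG : 0 ≤ G x - w x := sub_nonneg.2 (h x hx)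
    linarith [mul_nonneg (mul_nonneg (hk0 x hx) hEx) hwG]
  have hle : G b * E b ≤ c := by
    have hGa : G a * E a = c := by simp [hG, hE]
    linarith [hGE.eq_add_integral b right_mem_uIcc]
  calc w b ≤ G b := h b (right_mem_Icc.2 hab)
    _ = G b * E b * Real.exp (∫ t in a..b, k t) := by
      rw [mul_assoc, hE, ← Real.exp_add]; simp
    _ ≤ c * Real.exp (∫ t in a..b, k t) := by gcongr

theorem continuousOn_of_forall_continuousOn_Icc {X : Type*} [TopologicalSpace X] {f : ℝ → X}
    {a : ℝ} {I : Set ℝ} (hI : ∀ x ∈ I, a ≤ x) (hf : ∀ x ∈ I, ContinuousOn f (Icc a x)) :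
    ContinuousOn f I := by
  intro x hx
  by_cases hmax : ∃ y ∈ I, x < y
  · obtain ⟨y, hy, hxy⟩ := hmax
    refine (hf y hy x ⟨hI x hx, hxy.le⟩).mono_of_mem_nhdsWithin ?_
    filter_upwards [self_mem_nhdsWithin, mem_nhdsWithin_of_mem_nhds (Iio_mem_nhds hxy)]
      with z hz hzy using ⟨hI z hz, hzy.le⟩
  · push Not at hmax
    exact (hf x hx x ⟨hI x hx, le_rfl⟩).mono fun z hz ↦ ⟨hI z hz, hmax z hz⟩

theorem integrableOn_Icc_of_continuousOn_of_eqOn_const {E : Type*} [NormedAddCommGroup E]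
    {f : ℝ → E} {a b M : ℝ} {c : E} {I : Set ℝ} (hI : I.OrdConnected) (hIab : I ⊆ Icc a b)
    (hf : ContinuousOn f I) (hM : ∀ x ∈ I, ‖f x‖ ≤ M)
    (hc : EqOn f (fun _ ↦ c) (Icc a b \ I)) : IntegrableOn f (Icc a b) := by
  have hIm : MeasurableSet I := hI.measurableSet
  have hfI : IntegrableOn f I :=
    .of_bound (measure_ne_top_of_subset hIab measure_Icc_lt_top.ne).lt_top
      (hf.aestronglyMeasurable hIm) M (ae_restrict_of_forall_mem hIm hM)
  have hfc : IntegrableOn f (Icc a b \ I) :=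
    (integrableOn_const (measure_ne_top_of_subset sdiff_subset measure_Icc_lt_top.ne)).congr_fun
      hc.symm (measurableSet_Icc.diff hIm)
  exact union_sdiff_cancel hIab ▸ hfI.union hfc

/-! ### First-order Sturm–Liouville systems -/

section Solution

variable {𝕜 : Type*} [RCLike 𝕜] {a b : ℝ} {p u v : ℝ → 𝕜}

/-- An absolutely continuous solution of `u'' = p u` between `a` and `b`, encoded as the first-order
system `u' = v`, `v' = p u`. -/
structure IsSLSolutionOn (p : ℝ → 𝕜) (a b : ℝ) (u v : ℝ → 𝕜) : Prop where
  isPrimitiveOn : IsPrimitiveOn u v a b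
  isPrimitiveOn_deriv : IsPrimitiveOn v (fun t ↦ p t * u t) a b

theorem IsSLSolutionOn.mono {c : ℝ} (h : IsSLSolutionOn p a b u v) (hc : c ∈ uIcc a b) :
    IsSLSolutionOn p a c u v :=
  ⟨h.isPrimitiveOn.mono hc, h.isPrimitiveOn_deriv.mono hc⟩

theorem IsSLSolutionOn.linear_combination {u₁ v₁ u₂ v₂ : ℝ → 𝕜}
    (h₁ : IsSLSolutionOn p a b u₁ v₁) (h₂ : IsSLSolutionOn p a b u₂ v₂) (c d : 𝕜) :
    IsSLSolutionOn p a b (fun x ↦ c * u₁ x + d * u₂ x) (fun x ↦ c * v₁ x + d * v₂ x) where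
  isPrimitiveOn := (h₁.isPrimitiveOn.const_mul c).add (h₂.isPrimitiveOn.const_mul d)
  isPrimitiveOn_deriv := by
    convert (h₁.isPrimitiveOn_deriv.const_mul c).add (h₂.isPrimitiveOn_deriv.const_mul d) using 2
    ring

theorem IsSLSolutionOn.deriv_eq_zero_of_forall_eq_zero (hab : a < b) (h : IsSLSolutionOn p a b u v)
    (hu : ∀ x ∈ Icc a b, u x = 0) : v a = 0 := by
  have hIcc : uIcc a b = Icc a b := uIcc_of_le hab.le
  have hconst : EqOn v (fun _ ↦ v a) (Icc a b) := fun x hx ↦ by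
    have hint : ∫ t in a..x, p t * u t = 0 := by
      rw [intervalIntegral.integral_congr (g := fun _ ↦ 0), intervalIntegral.integral_zero]
      intro t ht
      rw [uIcc_of_le hx.1] at ht
      simp only [hu t ⟨ht.1, ht.2.trans hx.2⟩, mul_zero]
    rw [h.isPrimitiveOn_deriv.eq_add_integral x (hIcc ▸ hx), hint, add_zero]
  have hub := h.isPrimitiveOn.eq_add_integral b right_mem_uIcc
  rw [intervalIntegral.integral_congr (g := fun _ ↦ v a) (hIcc ▸ hconst),
    hu a (left_mem_Icc.2 hab.le), hu b (right_mem_Icc.2 hab.le),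
    intervalIntegral.integral_const, zero_add, eq_comm, smul_eq_zero] at hub
  exact hub.resolve_left (sub_ne_zero.2 hab.ne')

theorem IsSLSolutionOn.norm_add_norm_le (hab : a ≤ b) (hp : IntervalIntegrable p volume a b)
    (h : IsSLSolutionOn p a b u v) :
    ‖u b‖ + ‖v b‖ ≤ (‖u a‖ + ‖v a‖) * Real.exp (∫ t in a..b, (1 + ‖p t‖)) := by
  have hk : IntervalIntegrable (fun t ↦ 1 + ‖p t‖) volume a b :=
    intervalIntegrable_const.add hp.norm
  have hw : ContinuousOn (fun t ↦ ‖u t‖ + ‖v t‖) (uIcc a b) :=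
    h.isPrimitiveOn.continuousOn.norm.add h.isPrimitiveOn_deriv.continuousOn.norm
  refine gronwall_le_mul_exp_integral hab hk (fun x _ ↦ by positivity) hw fun x hx ↦ ?_
  have hxu : x ∈ uIcc a b := Icc_subset_uIcc hx
  have hx' := h.mono hxu
  have hv := hx'.isPrimitiveOn.intervalIntegrable
  have hpu := hx'.isPrimitiveOn_deriv.intervalIntegrable
  have hmono : ∫ t in a..x, (‖v t‖ + ‖p t * u t‖) ≤
      ∫ t in a..x, (1 + ‖p t‖) * (‖u t‖ + ‖v t‖) := by
    refine intervalIntegral.integral_mono_on hx.1 (hv.norm.add hpu.norm)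
      ((hk.mul_continuousOn hw).mono_set (uIcc_subset_uIcc_left hxu)) fun t _ ↦ ?_
    rw [norm_mul]
    nlinarith [norm_nonneg (u t), mul_nonneg (norm_nonneg (p t)) (norm_nonneg (v t))]
  rw [intervalIntegral.integral_add hv.norm hpu.norm] at hmono
  linarith [hx'.isPrimitiveOn.norm_le hx.1, hx'.isPrimitiveOn_deriv.norm_le hx.1]

-- Where `p * u` is not integrable the right-hand side of `hv` is the junk value `v a`. So `v` is
-- constant off the initial segment `I` carrying a genuine solution, which Grönwall bounds on `I`.
theorem isSLSolutionOn_of_eq_add_integral (hab : a ≤ b) (hp : IntervalIntegrable p volume a b)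
    (hu : ∀ x ∈ Icc a b, u x = u a + ∫ t in a..x, v t)
    (hv : ∀ x ∈ Icc a b, v x = v a + ∫ t in a..x, p t * u t) : IsSLSolutionOn p a b u v := by
  have of_integrable {x : ℝ} (hx : x ∈ Icc a b)
      (hpu : IntervalIntegrable (fun t ↦ p t * u t) volume a x) : IsSLSolutionOn p a x u v := by
    have hsub : uIcc a x ⊆ Icc a b := uIcc_of_le hx.1 ▸ Icc_subset_Icc_right hx.2
    have hright : IsPrimitiveOn v (fun t ↦ p t * u t) a x := ⟨hpu, fun t ht ↦ hv t (hsub ht)⟩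
    exact ⟨⟨hright.continuousOn.intervalIntegrable, fun t ht ↦ hu t (hsub ht)⟩, hright⟩
  let I : Set ℝ := {x ∈ Icc a b | IsSLSolutionOn p a x u v}
  have hIconn : I.OrdConnected := ⟨fun x hx y hy z hz ↦ by
    have haz : a ≤ z := hx.1.1.trans hz.1
    exact ⟨⟨haz, hz.2.trans hy.1.2⟩, hy.2.mono (Icc_subset_uIcc ⟨haz, hz.2⟩)⟩⟩
  have hcont : ContinuousOn v I :=
    continuousOn_of_forall_continuousOn_Icc (fun x hx ↦ hx.1.1) fun x hx ↦
      uIcc_of_le hx.1.1 ▸ hx.2.isPrimitiveOn_deriv.continuousOn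
  have hbound : ∀ x ∈ I, ‖v x‖ ≤ (‖u a‖ + ‖v a‖) * Real.exp (∫ t in a..b, (1 + ‖p t‖)) := by
    intro x hx
    have hpx := hp.mono_set (uIcc_subset_uIcc_left (Icc_subset_uIcc hx.1))
    have hmono : ∫ t in a..x, (1 + ‖p t‖) ≤ ∫ t in a..b, (1 + ‖p t‖) :=
      intervalIntegral.integral_mono_interval le_rfl hx.1.1 hx.1.2
        (Filter.Eventually.of_forall fun t ↦ by positivity) (intervalIntegrable_const.add hp.norm)
    calc ‖v x‖ ≤ ‖u x‖ + ‖v x‖ := le_add_of_nonneg_left (norm_nonneg _)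
      _ ≤ (‖u a‖ + ‖v a‖) * Real.exp (∫ t in a..x, (1 + ‖p t‖)) :=
        hx.2.norm_add_norm_le hx.1.1 hpx
      _ ≤ _ := by gcongr
  have hconst : EqOn v (fun _ ↦ v a) (Icc a b \ I) := fun x hx ↦ by
    have hpu : ¬ IntervalIntegrable (fun t ↦ p t * u t) volume a x :=
      fun hpu ↦ hx.2 ⟨hx.1, of_integrable hx.1 hpu⟩
    rw [hv x hx.1, intervalIntegral.integral_undef hpu, add_zero]
  have hvint : IntervalIntegrable v volume a b :=
    (intervalIntegrable_iff_integrableOn_Icc_of_le hab).2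
      (integrableOn_Icc_of_continuousOn_of_eqOn_const hIconn (sep_subset _ _) hcont hbound hconst)
  have hleft : IsPrimitiveOn u v a b := ⟨hvint, fun x hx ↦ hu x (uIcc_of_le hab ▸ hx)⟩
  exact of_integrable (right_mem_Icc.2 hab) (hp.mul_continuousOn hleft.continuousOn)

/-- The Wronskian `u₁ u₂' - u₁' u₂`, with `v₁` and `v₂` standing for the derivatives. -/
def wronskian {R : Type*} [Ring R] (u₁ v₁ u₂ v₂ : ℝ → R) (x : ℝ) : R :=
  u₁ x * v₂ x - v₁ x * u₂ x

theorem IsSLSolutionOn.wronskian_eq {u₁ v₁ u₂ v₂ : ℝ → 𝕜}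
    (h₁ : IsSLSolutionOn p a b u₁ v₁) (h₂ : IsSLSolutionOn p a b u₂ v₂) {x : ℝ}
    (hx : x ∈ uIcc a b) : wronskian u₁ v₁ u₂ v₂ x = wronskian u₁ v₁ u₂ v₂ a := by
  have hW := ((h₁.isPrimitiveOn.mul h₂.isPrimitiveOn_deriv).sub
    (h₁.isPrimitiveOn_deriv.mul h₂.isPrimitiveOn)).eq_add_integral x hx
  have hzero (t : ℝ) :
      v₁ t * v₂ t + u₁ t * (p t * u₂ t) - (p t * u₁ t * u₂ t + v₁ t * v₂ t) = 0 := by ring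
  simpa only [wronskian, hzero, intervalIntegral.integral_zero, add_zero] using hW

end Solution

/-! ### Solutions with discontinuity conditions -/

section Piecewise

variable {𝕜 : Type*} [RCLike 𝕜] {p : ℝ → 𝕜} {N : ℕ} {b : ℕ → ℝ} {γ η : ℕ → 𝕜}

/-- A solution of `y'' = p y` on the consecutive intervals between the nodes `b 0, …, b N` with
discontinuity conditions at the interior nodes. The function itself is the family of its pieces:
`y j` and `y' j`, for `1 ≤ j ≤ N`, live on the interval from `b (j - 1)` to `b j`. -/
structure IsPiecewiseSLSolution (p : ℝ → 𝕜) (N : ℕ) (b : ℕ → ℝ) (γ η : ℕ → 𝕜)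
    (y y' : ℕ → ℝ → 𝕜) : Prop where
  isSLSolutionOn : ∀ j, 1 ≤ j → j ≤ N → IsSLSolutionOn p (b (j - 1)) (b j) (y j) (y' j)
  jump : ∀ j, 1 ≤ j → j < N → y (j + 1) (b j) = γ j * y j (b j)
  jump_deriv : ∀ j, 1 ≤ j → j < N →
    y' (j + 1) (b j) = (γ j)⁻¹ * y' j (b j) + η j * y j (b j)

theorem IsPiecewiseSLSolution.linear_combination {y y' z z' : ℕ → ℝ → 𝕜}
    (hy : IsPiecewiseSLSolution p N b γ η y y') (hz : IsPiecewiseSLSolution p N b γ η z z')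
    (c d : 𝕜) :
    IsPiecewiseSLSolution p N b γ η (fun j x ↦ c * y j x + d * z j x)
      (fun j x ↦ c * y' j x + d * z' j x) where
  isSLSolutionOn j h1 hN := (hy.isSLSolutionOn j h1 hN).linear_combination
    (hz.isSLSolutionOn j h1 hN) c d
  jump j h1 hN := by rw [hy.jump j h1 hN, hz.jump j h1 hN]; ring
  jump_deriv j h1 hN := by rw [hy.jump_deriv j h1 hN, hz.jump_deriv j h1 hN]; ring

theorem IsPiecewiseSLSolution.wronskian_succ_eq {y y' z z' : ℕ → ℝ → 𝕜}
    (hy : IsPiecewiseSLSolution p N b γ η y y') (hz : IsPiecewiseSLSolution p N b γ η z z')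
    {j : ℕ} (h1 : 1 ≤ j) (hN : j < N) (hγ : γ j ≠ 0) :
    wronskian (y (j + 1)) (y' (j + 1)) (z (j + 1)) (z' (j + 1)) (b j) =
      wronskian (y j) (y' j) (z j) (z' j) (b j) := by
  rw [wronskian, wronskian, hy.jump j h1 hN, hy.jump_deriv j h1 hN, hz.jump j h1 hN,
    hz.jump_deriv j h1 hN]
  field_simp
  ring

theorem IsPiecewiseSLSolution.wronskian_eq {y y' z z' : ℕ → ℝ → 𝕜}
    (hy : IsPiecewiseSLSolution p N b γ η y y') (hz : IsPiecewiseSLSolution p N b γ η z z')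
    (hγ : ∀ j, 1 ≤ j → j < N → γ j ≠ 0) {j : ℕ} (h1 : 1 ≤ j) (hN : j ≤ N) {x : ℝ}
    (hx : x ∈ uIcc (b (j - 1)) (b j)) :
    wronskian (y j) (y' j) (z j) (z' j) x = wronskian (y 1) (y' 1) (z 1) (z' 1) (b 0) := by
  induction j, h1 using Nat.le_induction generalizing x with
  | base => exact (hy.isSLSolutionOn 1 le_rfl hN).wronskian_eq (hz.isSLSolutionOn 1 le_rfl hN) hx
  | succ j h1 ih =>
    rw [(hy.isSLSolutionOn (j + 1) j.succ_pos hN).wronskian_eq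
      (hz.isSLSolutionOn (j + 1) j.succ_pos hN) hx, Nat.add_sub_cancel,
      hy.wronskian_succ_eq hz h1 hN (hγ j h1 hN), ih (Nat.le_of_succ_le hN) right_mem_uIcc]

/-- The cosine-type solution `C` and the sine-type solution `S` of the problem with discontinuity
conditions, normalised at the first node. -/
structure IsFundamentalSystem (p : ℝ → 𝕜) (N : ℕ) (b : ℕ → ℝ) (γ η : ℕ → 𝕜)
    (C C' S S' : ℕ → ℝ → 𝕜) : Prop where
  cosine : IsPiecewiseSLSolution p N b γ η C C'
  sine : IsPiecewiseSLSolution p N b γ η S S'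
  cosine_init : C 1 (b 0) = 1
  cosine_deriv_init : C' 1 (b 0) = 0
  sine_init : S 1 (b 0) = 0
  sine_deriv_init : S' 1 (b 0) = 1

namespace IsFundamentalSystem

variable {C C' S S' y y' : ℕ → ℝ → 𝕜} {j : ℕ} {x : ℝ}

theorem wronskian_eq_one (h : IsFundamentalSystem p N b γ η C C' S S')
    (hγ : ∀ j, 1 ≤ j → j < N → γ j ≠ 0) (h1 : 1 ≤ j) (hN : j ≤ N)
    (hx : x ∈ uIcc (b (j - 1)) (b j)) : wronskian (C j) (C' j) (S j) (S' j) x = 1 := by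
  rw [h.cosine.wronskian_eq h.sine hγ h1 hN hx, wronskian, h.cosine_init, h.cosine_deriv_init,
    h.sine_init, h.sine_deriv_init]
  ring

-- Cramer's rule: the coefficients of `y` in terms of `C` and `S` are the Wronskians `W(y, S)` and
-- `W(C, y)`, which are constant.
theorem eq_linear_combination (h : IsFundamentalSystem p N b γ η C C' S S')
    (hγ : ∀ j, 1 ≤ j → j < N → γ j ≠ 0) (hy : IsPiecewiseSLSolution p N b γ η y y')
    (h1 : 1 ≤ j) (hN : j ≤ N) (hx : x ∈ uIcc (b (j - 1)) (b j)) :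
    y j x = y 1 (b 0) * C j x + y' 1 (b 0) * S j x ∧
      y' j x = y 1 (b 0) * C' j x + y' 1 (b 0) * S' j x := by
  have hCS := h.wronskian_eq_one hγ h1 hN hx
  have hyS := hy.wronskian_eq h.sine hγ h1 hN hx
  have hCy := h.cosine.wronskian_eq hy hγ h1 hN hx
  simp only [wronskian, h.cosine_init, h.cosine_deriv_init, h.sine_init, h.sine_deriv_init]
    at hCS hyS hCy
  constructor
  · linear_combination C j x * hyS + S j x * hCy - y j x * hCS
  · linear_combination C' j x * hyS + S' j x * hCy - y' j x * hCS

theorem exists_linear_combination_ne_zero (h : IsFundamentalSystem p N b γ η C C' S S')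
    (h01 : b 0 < b 1) (hN : 1 ≤ N) {c d : 𝕜} (hcd : c ≠ 0 ∨ d ≠ 0) :
    ∃ x ∈ Icc (b 0) (b 1), c * C 1 x + d * S 1 x ≠ 0 := by
  by_contra! hzero
  have hc : c = 0 := by
    simpa [h.cosine_init, h.sine_init] using hzero (b 0) (left_mem_Icc.2 h01.le)
  have hsol := (h.cosine.linear_combination h.sine c d).isSLSolutionOn 1 le_rfl hN
  have hd : d = 0 := by
    simpa [h.cosine_deriv_init, h.sine_deriv_init] using
      hsol.deriv_eq_zero_of_forall_eq_zero h01 hzero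
  exact hcd.elim (· hc) (· hd)

theorem exists_solution_iff (h : IsFundamentalSystem p N b γ η C C' S S')
    (h01 : b 0 < b 1) (hN : 1 ≤ N) (hγ : ∀ j, 1 ≤ j → j < N → γ j ≠ 0)
    (P : 𝕜 → 𝕜 → 𝕜 → 𝕜 → Prop) :
    (∃ y y' : ℕ → ℝ → 𝕜, IsPiecewiseSLSolution p N b γ η y y' ∧
      P (y 1 (b 0)) (y' 1 (b 0)) (y N (b N)) (y' N (b N)) ∧
      ∃ j, 1 ≤ j ∧ j ≤ N ∧ ∃ x ∈ Icc (b (j - 1)) (b j), y j x ≠ 0) ↔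
    ∃ c d : 𝕜, (c ≠ 0 ∨ d ≠ 0) ∧
      P c d (c * C N (b N) + d * S N (b N)) (c * C' N (b N) + d * S' N (b N)) := by
  constructor
  · rintro ⟨y, y', hy, hP, j, h1, hjN, x, hx, hne⟩
    refine ⟨y 1 (b 0), y' 1 (b 0), ?_, ?_⟩
    · contrapose! hne
      rw [(h.eq_linear_combination hγ hy h1 hjN (Icc_subset_uIcc hx)).1, hne.1, hne.2]
      ring
    · obtain ⟨hyN, hy'N⟩ := h.eq_linear_combination hγ hy hN le_rfl right_mem_uIcc
      rwa [hyN, hy'N] at hP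
  · rintro ⟨c, d, hcd, hP⟩
    refine ⟨_, _, h.cosine.linear_combination h.sine c d, ?_, 1, le_rfl, hN,
      h.exists_linear_combination_ne_zero h01 hN hcd⟩
    simpa [h.cosine_init, h.cosine_deriv_init, h.sine_init, h.sine_deriv_init] using hP

end IsFundamentalSystem

end Piecewise

theorem exists_ne_zero_iff_det_eq_zero {K : Type*} [Field K] (m₁₁ m₁₂ m₂₁ m₂₂ : K) :
    (∃ c d : K, (c ≠ 0 ∨ d ≠ 0) ∧ m₁₁ * c + m₁₂ * d = 0 ∧ m₂₁ * c + m₂₂ * d = 0) ↔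
      m₁₁ * m₂₂ - m₁₂ * m₂₁ = 0 := by
  rw [← Matrix.det_fin_two_of, ← Matrix.exists_mulVec_eq_zero_iff]
  have hne (v : Fin 2 → K) : v ≠ 0 ↔ v 0 ≠ 0 ∨ v 1 ≠ 0 := by
    simp only [ne_eq, funext_iff, Fin.forall_fin_two, Pi.zero_apply, not_and_or]
  have hmul (v : Fin 2 → K) : !![m₁₁, m₁₂; m₂₁, m₂₂].mulVec v = 0 ↔
      m₁₁ * v 0 + m₁₂ * v 1 = 0 ∧ m₂₁ * v 0 + m₂₂ * v 1 = 0 := by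
    simp [funext_iff, Fin.forall_fin_two, Matrix.vecHead, Matrix.vecTail]
  simp only [hne, hmul]
  exact ⟨fun ⟨c, d, h⟩ ↦ ⟨![c, d], h⟩, fun ⟨v, h⟩ ↦ ⟨v 0, v 1, h⟩⟩

theorem piecewiseSLSol_iff {q : ℝ → ℝ} {N : ℕ} {b : ℕ → ℝ} {γ η : ℕ → ℝ} {lam : ℂ}
    {y y' : ℕ → ℝ → ℂ} (hb : MonotoneOn b (Iic N)) (hq : IntegrableOn q (Icc (b 0) (b N))) :
    PiecewiseSLSol q N b γ η lam y y' ↔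
      IsPiecewiseSLSolution (fun t ↦ (q t : ℂ) - lam) N b (fun j ↦ (γ j : ℂ)) (fun j ↦ (η j : ℂ))
        y y' := by
  have hab {j : ℕ} (hj : j ≤ N) : b (j - 1) ≤ b j :=
    hb (mem_Iic.2 (by omega)) (mem_Iic.2 hj) (Nat.sub_le j 1)
  have hp {j : ℕ} (hj : j ≤ N) :
      IntervalIntegrable (fun t ↦ (q t : ℂ) - lam) volume (b (j - 1)) (b j) := by
    have hsub : Icc (b (j - 1)) (b j) ⊆ Icc (b 0) (b N) :=
      Icc_subset_Icc (hb (mem_Iic.2 N.zero_le) (mem_Iic.2 (by omega)) (Nat.zero_le _))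
        (hb (mem_Iic.2 hj) (mem_Iic.2 le_rfl) hj)
    have hqj : IntegrableOn (fun t ↦ (q t : ℂ)) (Icc (b (j - 1)) (b j)) :=
      Integrable.ofReal (hq.mono_set hsub)
    exact ((intervalIntegrable_iff_integrableOn_Icc_of_le (hab hj)).2 hqj).sub
      intervalIntegrable_const
  constructor
  · rintro ⟨hy, hy', hjump⟩
    exact ⟨fun j h1 hN ↦ isSLSolutionOn_of_eq_add_integral (hab hN) (hp hN) (hy j h1 hN)
      (hy' j h1 hN), fun j h1 hN ↦ (hjump j h1 (by omega)).1,
      fun j h1 hN ↦ (hjump j h1 (by omega)).2⟩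
  · intro h
    have hsol {j : ℕ} (h1 : 1 ≤ j) (hN : j ≤ N) := h.isSLSolutionOn j h1 hN
    exact ⟨fun j h1 hN x hx ↦ (hsol h1 hN).isPrimitiveOn.eq_add_integral x (Icc_subset_uIcc hx),
      fun j h1 hN x hx ↦ (hsol h1 hN).isPrimitiveOn_deriv.eq_add_integral x
        (Icc_subset_uIcc hx),
      fun j h1 hN ↦ ⟨h.jump j h1 (by omega), h.jump_deriv j h1 (by omega)⟩⟩

theorem eigenvalue_iff_characteristic_function_zero_general {𝕜 : Type*} [RCLike 𝕜]
    {p : ℝ → 𝕜} {N : ℕ} {b : ℕ → ℝ} {γ η : ℕ → 𝕜} {C C' S S' : ℕ → ℝ → 𝕜}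
    (hCS : IsFundamentalSystem p N b γ η C C' S S') (hN : 1 ≤ N) (h01 : b 0 < b 1)
    (hγ : ∀ j, 1 ≤ j → j < N → γ j ≠ 0) (α β h : 𝕜) :
    (∃ y y' : ℕ → ℝ → 𝕜, IsPiecewiseSLSolution p N b γ η y y' ∧
      y 1 (b 0) = α * y N (b N) ∧ y' 1 (b 0) - h * y 1 (b 0) = β * y' N (b N) ∧
      ∃ j, 1 ≤ j ∧ j ≤ N ∧ ∃ x ∈ Icc (b (j - 1)) (b j), y j x ≠ 0) ↔
    α * (C N (b N) + h * S N (b N)) + β * S' N (b N) - (1 + α * β) = 0 := by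
  have hsol := hCS.exists_solution_iff h01 hN hγ fun y₀ y₀' y₁ y₁' ↦
    y₀ = α * y₁ ∧ y₀' - h * y₀ = β * y₁'
  simp only [and_assoc] at hsol
  have hW := hCS.wronskian_eq_one hγ hN le_rfl right_mem_uIcc
  rw [wronskian] at hW
  have hdet : (1 - α * C N (b N)) * (1 - β * S' N (b N)) -
      -(α * S N (b N)) * (-h - β * C' N (b N)) =
      -(α * (C N (b N) + h * S N (b N)) + β * S' N (b N) - (1 + α * β)) := by
    linear_combination α * β * hW
  rw [hsol, ← neg_eq_zero, ← hdet, ← exists_ne_zero_iff_det_eq_zero]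
  refine exists₂_congr fun c d ↦ and_congr_right fun _ ↦ and_congr ?_ ?_
  all_goals
    rw [← sub_eq_zero]
    ring_nf

/-- λ is an eigenvalue of the quasi-periodic boundary value problem B
(there is a nontrivial piecewise solution satisfying the discontinuity conditions and
y(0) = α·y(T), y'(0) − h·y(0) = β·y'(T)) if and only if a(λ) = 0, where
a(λ) = α·φ(T,λ) + β·S'(T,λ) − (1 + αβ) and φ = C + h·S. -/
theorem eigenvalue_iff_characteristic_function_zero
    (T : ℝ) (hT : 0 < T) (q : ℝ → ℝ) (hq : IntegrableOn q (Icc 0 T))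
    (N : ℕ) (hN : 1 ≤ N) (b : ℕ → ℝ) (γ η : ℕ → ℝ) (h : ℝ)
    (hb0 : b 0 = 0) (hbN : b N = T)
    (hbmono : ∀ j < N, b j < b (j + 1))
    (hγ : ∀ j, 1 ≤ j → j ≤ N - 1 → 0 < γ j)
    (α β : ℝ) (hαβ : 0 < α * β)
    (lam : ℂ) (S S' C C' : ℕ → ℝ → ℂ)
    (hS : PiecewiseSLSol q N b γ η lam S S')
    (hC : PiecewiseSLSol q N b γ η lam C C')
    (hS0 : S 1 0 = 0) (hS'0 : S' 1 0 = 1) (hC0 : C 1 0 = 1) (hC'0 : C' 1 0 = 0) :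
    (∃ y y' : ℕ → ℝ → ℂ,
        PiecewiseSLSol q N b γ η lam y y' ∧
        y 1 0 = (α : ℂ) * y N T ∧
        y' 1 0 - (h : ℂ) * y 1 0 = (β : ℂ) * y' N T ∧
        ∃ j, 1 ≤ j ∧ j ≤ N ∧ ∃ x ∈ Icc (b (j - 1)) (b j), y j x ≠ 0)
      ↔ (α : ℂ) * (C N T + (h : ℂ) * S N T) + (β : ℂ) * S' N T
          - (1 + (α : ℂ) * (β : ℂ)) = 0 := by
  have hb : StrictMonoOn b (Iic N) := strictMonoOn_Iic_of_lt_succ hbmono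
  have hsol (y y' : ℕ → ℝ → ℂ) : PiecewiseSLSol q N b γ η lam y y' ↔ _ :=
    piecewiseSLSol_iff hb.monotoneOn (by rwa [hb0, hbN])
  simp only [hsol] at hS hC ⊢
  rw [← hb0] at hS0 hS'0 hC0 hC'0
  have hCS : IsFundamentalSystem _ N b _ _ C C' S S' := ⟨hC, hS, hC0, hC'0, hS0, hS'0⟩
  simpa only [hb0, hbN] using eigenvalue_iff_characteristic_function_zero_general hCS hN
    (hbmono 0 hN) (fun j h1 hjN ↦ by exact_mod_cast (hγ j h1 (by omega)).ne') (α : ℂ) β h
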